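/- arXiv:2306.17304 — 7 statements merged into one kernel-verified Lean document; each statement's English description precedes it below -/
import Mathlib

section
/- Let T : ℚ[x] → ℚ[x] be the linear operator defined by T(p) = x·p − (1/12)·p′, where p′ denotes the derivative of p. Then for every odd integer t ≥ 1, T^t(1) = Σ_{k=0}^{⌊t/2⌋} C(t,2k) · ((2k)!/(k!·(−24)^k)) · x^{t−2k}. -/
open Polynomial

/-- The coefficients, via descending factorials. -/
noncomputable def hsbCoeff (t k : ℕ) : ℚ :=
  (t.descFactorial (2 * k) : ℚ) / ((k.factorial : ℚ) * (-24 : ℚ) ^ k)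

lemma hsbCoeff_zero_of_lt {t k : ℕ} (h : t < 2 * k) : hsbCoeff t k = 0 := by
  simp [hsbCoeff, Nat.descFactorial_of_lt h]

lemma hsbCoeff_rec (t k : ℕ) (h : 2 * k ≤ t) :
    hsbCoeff (t + 1) (k + 1) = hsbCoeff t (k + 1) - 1 / 12 * hsbCoeff t k * ((t - 2 * k : ℕ) : ℚ) := by
  have e1 : (t + 1).descFactorial (2 * (k + 1)) = (t + 1) * t.descFactorial (2 * k + 1) := by
    rw [show 2 * (k + 1) = (2 * k + 1) + 1 by ring, Nat.succ_descFactorial_succ]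
  have e2 : (t.descFactorial (2 * (k + 1)) : ℚ)
      = ((t : ℚ) - 2 * k - 1) * t.descFactorial (2 * k + 1) := by
    rw [show 2 * (k + 1) = (2 * k + 1) + 1 by ring, Nat.descFactorial_succ]
    rcases Nat.lt_or_ge t (2 * k + 1) with h1 | h1
    · rw [Nat.descFactorial_of_lt h1]; simp
    · push_cast [Nat.cast_sub h1]; ring
  have e3 : (t.descFactorial (2 * k + 1) : ℚ) = ((t : ℚ) - 2 * k) * t.descFactorial (2 * k) := by
    rw [Nat.descFactorial_succ]
    push_cast [Nat.cast_sub h]; ring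
  have hk : (k.factorial : ℚ) ≠ 0 := by exact_mod_cast k.factorial_ne_zero
  have hk1 : (k : ℚ) + 1 ≠ 0 := by positivity
  unfold hsbCoeff
  rw [e1, e2, Nat.factorial_succ]
  push_cast [Nat.cast_sub h]
  rw [e3, pow_succ]
  field_simp
  ring

lemma hsb_term (t k : ℕ) :
    Polynomial.C (hsbCoeff (t + 1) (k + 1)) * X ^ (t + 1 - 2 * (k + 1))
      = X * (Polynomial.C (hsbCoeff t (k + 1)) * X ^ (t - 2 * (k + 1)))
        - Polynomial.C (1/12 : ℚ) * derivative (Polynomial.C (hsbCoeff t k) * X ^ (t - 2 * k)) := by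
  rcases Nat.lt_or_ge t (2 * k) with h | h
  · rw [hsbCoeff_zero_of_lt h, hsbCoeff_zero_of_lt (show t < 2 * (k + 1) by omega),
      hsbCoeff_zero_of_lt (show t + 1 < 2 * (k + 1) by omega)]
    simp
  · have hX : X * (Polynomial.C (hsbCoeff t (k + 1)) * X ^ (t - 2 * (k + 1)))
        = Polynomial.C (hsbCoeff t (k + 1)) * X ^ (t + 1 - 2 * (k + 1)) := by
      rcases Nat.lt_or_ge t (2 * (k + 1)) with h1 | h1
      · simp [hsbCoeff_zero_of_lt h1]
      · rw [show t + 1 - 2 * (k + 1) = (t - 2 * (k + 1)) + 1 by omega, pow_succ]; ring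
    rw [hX, hsbCoeff_rec t k h, derivative_C_mul_X_pow,
      show t - 2 * k - 1 = t + 1 - 2 * (k + 1) by omega]
    simp only [map_sub, map_mul]
    ring

lemma hsb_iter (T : Polynomial ℚ → Polynomial ℚ)
    (hT : ∀ p : Polynomial ℚ, T p = X * p - Polynomial.C (1/12 : ℚ) * derivative p) (t : ℕ) :
    T^[t] 1 = ∑ k ∈ Finset.range (t + 1), Polynomial.C (hsbCoeff t k) * X ^ (t - 2 * k) := by
  induction t with
  | zero => simp [hsbCoeff]
  | succ t ih =>
    rw [Function.iterate_succ_apply', hT, ih, Finset.sum_range_succ' _ (t + 1),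
      Finset.sum_congr rfl (fun k _ => hsb_term t k), Finset.sum_sub_distrib,
      derivative_sum, Finset.mul_sum (Finset.range (t + 1)) _ (Polynomial.C (1/12 : ℚ))]
    have h2 : X * ∑ k ∈ Finset.range (t + 1), Polynomial.C (hsbCoeff t k) * X ^ (t - 2 * k)
        = ∑ k ∈ Finset.range (t + 1),
            X * (Polynomial.C (hsbCoeff t (k + 1)) * X ^ (t - 2 * (k + 1)))
          + Polynomial.C (hsbCoeff (t + 1) 0) * X ^ (t + 1 - 2 * 0) := by
      have h3 : ∑ k ∈ Finset.range (t + 1), Polynomial.C (hsbCoeff t k) * X ^ (t - 2 * k)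
          = ∑ k ∈ Finset.range (t + 1 + 1), Polynomial.C (hsbCoeff t k) * X ^ (t - 2 * k) := by
        rw [Finset.sum_range_succ _ (t + 1),
          hsbCoeff_zero_of_lt (show t < 2 * (t + 1) by omega)]
        simp
      rw [h3, Finset.sum_range_succ', mul_add, Finset.mul_sum]
      congr 1
      simp [hsbCoeff, pow_succ']
    rw [h2]
    ring

/-- Lemma 3.1: with `T` realizing the square-bracket Heisenberg mode `h[-1]` on polynomial
states (`x = h(-1)`), for every odd `t ≥ 1`,
`T^t(1) = ∑_{k=0}^{⌊t/2⌋} C(t,2k) · (2k)!/(k!·(−24)^k) · x^{t−2k}`. -/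
theorem heisenberg_square_bracket_power
    (T : Polynomial ℚ → Polynomial ℚ)
    (hT : ∀ p : Polynomial ℚ, T p = X * p - Polynomial.C (1/12 : ℚ) * derivative p)
    (t : ℕ) (ht : Odd t) (ht1 : 1 ≤ t) :
    T^[t] 1 = ∑ k ∈ Finset.range (t / 2 + 1),
      Polynomial.C ((t.choose (2 * k) : ℚ) * ((2 * k).factorial : ℚ) /
        ((k.factorial : ℚ) * (-24 : ℚ) ^ k)) * X ^ (t - 2 * k) := by
  rw [hsb_iter T hT t]
  symm
  have hc : ∀ k, (t.choose (2 * k) : ℚ) * ((2 * k).factorial : ℚ) /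
        ((k.factorial : ℚ) * (-24 : ℚ) ^ k) = hsbCoeff t k := by
    intro k
    rw [hsbCoeff, Nat.descFactorial_eq_factorial_mul_choose]
    push_cast
    ring
  simp only [hc]
  apply Finset.sum_subset
  · intro k hk
    simp only [Finset.mem_range] at *
    omega
  · intro k _ hk
    simp only [Finset.mem_range] at hk
    rw [hsbCoeff_zero_of_lt (by omega)]
    simp
end

section
/- Let T : ℚ[x] → ℚ[x] be the linear operator defined by T(p) = x·p − (1/12)·p′, where p′ denotes the derivative of p. Then for every odd integer t ≥ 1, the derivative of T^t(1) satisfies (T^t(1))′ = Σ_{k=0}^{⌊(t−1)/2⌋} C(t,2k+1) · ((2k+1)!/(k!·(−24)^k)) · x^{t−2k−1}. -/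
open Polynomial

theorem aux_deriv (T : Polynomial ℚ → Polynomial ℚ)
    (hT : ∀ p : Polynomial ℚ, T p = X * p - Polynomial.C (1/12 : ℚ) * derivative p) (n : ℕ) :
    derivative (T^[n+1] 1) = Polynomial.C ((n : ℚ) + 1) * T^[n] 1 := by
  induction n with
  | zero => simp [hT]
  | succ n ih =>
    have h1 := hT (T^[n+1] 1)
    rw [← Function.iterate_succ_apply' T (n+1)] at h1
    have h2 := hT (T^[n] 1)
    rw [← Function.iterate_succ_apply' T n] at h2
    rw [h1, ih]
    simp only [derivative_sub, derivative_mul, derivative_X, derivative_C, ih]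
    push_cast
    simp only [C_add, C_1, Nat.succ_eq_add_one] at *
    linear_combination (-(C (n:ℚ) + 1)) * h2

theorem aux_term (n k : ℕ) :
    Polynomial.C (((n+2).descFactorial (2 * (k+1)) : ℚ) /
        (((k+1).factorial : ℚ) * (-24 : ℚ) ^ (k+1))) * X ^ (n + 2 - 2 * (k+1)) =
    X * (Polynomial.C (((n+1).descFactorial (2 * (k+1)) : ℚ) /
        (((k+1).factorial : ℚ) * (-24 : ℚ) ^ (k+1))) * X ^ (n + 1 - 2 * (k+1))) -
    Polynomial.C (1/12 : ℚ) * (Polynomial.C ((n : ℚ) + 1) *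
      (Polynomial.C ((n.descFactorial (2 * k) : ℚ) /
        ((k.factorial : ℚ) * (-24 : ℚ) ^ k)) * X ^ (n - 2 * k))) := by
  have e : 2 * (k+1) = 2 * k + 1 + 1 := by ring
  rw [e, Nat.succ_descFactorial_succ (n+1), Nat.succ_descFactorial_succ n,
    Nat.succ_descFactorial_succ n, Nat.descFactorial_succ n]
  rcases lt_or_ge n (2*k) with h | h
  · rw [Nat.descFactorial_eq_zero_iff_lt.mpr h]; simp
  · obtain ⟨j, rfl⟩ := Nat.exists_eq_add_of_le h
    have hk : (k.factorial : ℚ) ≠ 0 := by exact_mod_cast k.factorial_ne_zero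
    have hk1 : (k : ℚ) + 1 ≠ 0 := by positivity
    have e1 : 2 * k + j + 2 - (2 * k + 1 + 1) = j := by omega
    have e2 : 2 * k + j - 2 * k = j := by omega
    rw [e1, e2]
    have e3 : (X : ℚ[X]) * (C (((((2 * k + j + 1) * (j * (2 * k + j).descFactorial (2 * k)) : ℕ)) : ℚ) /
        (((k+1).factorial : ℚ) * (-24 : ℚ) ^ (k+1))) * X ^ (2 * k + j + 1 - (2 * k + 1 + 1)))
        = C (((((2 * k + j + 1) * (j * (2 * k + j).descFactorial (2 * k)) : ℕ)) : ℚ) /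
        (((k+1).factorial : ℚ) * (-24 : ℚ) ^ (k+1))) * X ^ j := by
      cases j with
      | zero => simp
      | succ j =>
        have : 2 * k + (j + 1) + 1 - (2 * k + 1 + 1) = j := by omega
        rw [this]; ring
    rw [e3, ← mul_assoc (C ((_ : ℕ) + 1 : ℚ)), ← mul_assoc (C (1 / 12 : ℚ)), ← C_mul, ← C_mul, ← sub_mul, ← C_sub]
    congr 2
    rw [Nat.factorial_succ, pow_succ]
    push_cast
    field_simp
    ring

theorem aux_formula (T : Polynomial ℚ → Polynomial ℚ)
    (hT : ∀ p : Polynomial ℚ, T p = X * p - Polynomial.C (1/12 : ℚ) * derivative p) (n : ℕ) :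
    ∀ N, n < 2 * N → T^[n] 1 = ∑ k ∈ Finset.range N,
      Polynomial.C ((n.descFactorial (2 * k) : ℚ) /
        ((k.factorial : ℚ) * (-24 : ℚ) ^ k)) * X ^ (n - 2 * k) := by
  induction n using Nat.twoStepInduction with
  | zero =>
    intro N hN
    obtain ⟨M, rfl⟩ : ∃ M, N = M + 1 := ⟨N - 1, by omega⟩
    rw [Finset.sum_range_succ', Finset.sum_eq_zero]
    · simp
    · intro k _
      rw [Nat.descFactorial_eq_zero_iff_lt.mpr (by omega)]; simp
  | one =>
    intro N hN
    obtain ⟨M, rfl⟩ : ∃ M, N = M + 1 := ⟨N - 1, by omega⟩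
    rw [Finset.sum_range_succ', Finset.sum_eq_zero]
    · simp [hT]
    · intro k _
      rw [Nat.descFactorial_eq_zero_iff_lt.mpr (by omega)]; simp
  | more n ih0 ih1 =>
    intro N hN
    obtain ⟨M, rfl⟩ : ∃ M, N = M + 1 := ⟨N - 1, by omega⟩
    rw [Function.iterate_succ_apply' T (n+1), hT, aux_deriv T hT, ih0 M (by omega),
      ih1 (M+1) (by omega), Finset.sum_range_succ', Finset.sum_range_succ',
      Finset.sum_congr rfl (fun k _ => aux_term n k), Finset.sum_sub_distrib, mul_add,
      Finset.mul_sum, Finset.mul_sum, Finset.mul_sum]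
    simp
    ring



/-- Lemma 3.3: with `T` realizing the square-bracket Heisenberg mode `h[-1]` on polynomial
states (`x = h(-1)`, and the derivative realizing the mode `h(1)`), for every odd `t ≥ 1`,
`(T^t(1))′ = ∑_{k=0}^{⌊(t−1)/2⌋} C(t,2k+1) · (2k+1)!/(k!·(−24)^k) · x^{t−2k−1}`. -/
theorem heisenberg_h1_square_bracket_power
    (T : Polynomial ℚ → Polynomial ℚ)
    (hT : ∀ p : Polynomial ℚ, T p = X * p - Polynomial.C (1/12 : ℚ) * derivative p)
    (t : ℕ) (ht : Odd t) (ht1 : 1 ≤ t) :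
    derivative (T^[t] 1) = ∑ k ∈ Finset.range ((t - 1) / 2 + 1),
      Polynomial.C ((t.choose (2 * k + 1) : ℚ) * ((2 * k + 1).factorial : ℚ) /
        ((k.factorial : ℚ) * (-24 : ℚ) ^ k)) * X ^ (t - 2 * k - 1) := by
  obtain ⟨m, rfl⟩ := ht
  rw [aux_deriv T hT, aux_formula T hT (2*m) (m+1) (by omega), Finset.mul_sum]
  have e : (2 * m + 1 - 1) / 2 + 1 = m + 1 := by omega
  rw [e]
  refine Finset.sum_congr rfl fun k _ => ?_
  have e1 : 2 * m + 1 - 2 * k - 1 = 2 * m - 2 * k := by omega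
  rw [e1, ← mul_assoc, ← C_mul]
  congr 2
  have h := Nat.succ_descFactorial_succ (2*m) (2*k)
  rw [Nat.descFactorial_eq_factorial_mul_choose] at h
  have h' := congrArg (Nat.cast : ℕ → ℚ) h
  push_cast at h'
  rw [← mul_div_assoc]
  congr 1
  push_cast
  linear_combination -h'
end

section
/- Let p be an odd prime, let l ≥ 1 and n ≥ 0 be integers, let 0 ≤ a ≤ b be integers, and set r = p^a(p−1) + l and s = p^b(p−1) + l. Then Σ_{j=0}^{n} C(n,j)·(−1)^{n+j}·(j+1)^{r−1} ≡ Σ_{j=0}^{n} C(n,j)·(−1)^{n+j}·(j+1)^{s−1} (mod p^{a+1}) as integers. -/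
theorem coprime_pow_aux (p : ℕ) (hp : p.Prime) (x a b : ℕ) (hab : a ≤ b) (hx : ¬ p ∣ x) :
    x ^ (p ^ b * (p - 1)) ≡ 1 [MOD p ^ (a + 1)] := by
  have hc : Nat.Coprime x (p ^ (b + 1)) :=
    Nat.Coprime.pow_right _ ((Nat.Prime.coprime_iff_not_dvd hp).2 hx).symm
  have h := Nat.ModEq.pow_totient hc
  rw [Nat.totient_prime_pow_succ hp] at h
  exact h.of_dvd (pow_dvd_pow p (by omega))

theorem dvd_pow_aux (p : ℕ) (hp : p.Prime) (x a b l : ℕ) (hab : a ≤ b) (hl : 1 ≤ l)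
    (hx : p ∣ x) : p ^ (a + 1) ∣ x ^ (p ^ b * (p - 1) + l - 1) := by
  have h1 : b < p ^ b := Nat.lt_pow_self hp.one_lt
  have h2 : p ^ b ≤ p ^ b * (p - 1) :=
    Nat.le_mul_of_pos_right _ (by have := hp.two_le; omega)
  exact (pow_dvd_pow p (by omega)).trans (pow_dvd_pow_of_dvd hx _)

theorem term_aux (p : ℕ) (hp : p.Prime) (x a b l : ℕ) (hab : a ≤ b) (hl : 1 ≤ l) :
    x ^ (p ^ a * (p - 1) + l - 1) ≡ x ^ (p ^ b * (p - 1) + l - 1) [MOD p ^ (a + 1)] := by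
  by_cases hx : p ∣ x
  · exact ((Nat.modEq_zero_iff_dvd).2 (dvd_pow_aux p hp x a a l le_rfl hl hx)).trans
      ((Nat.modEq_zero_iff_dvd).2 (dvd_pow_aux p hp x a b l hab hl hx)).symm
  · rw [Nat.add_sub_assoc hl, Nat.add_sub_assoc hl, pow_add x, pow_add x]
    exact Nat.ModEq.mul_right _ ((coprime_pow_aux p hp x a a le_rfl hx).trans
      (coprime_pow_aux p hp x a b hab hx).symm)

/-- The core congruence of Lemma 3.6:
`n!·S_r^{(n+1)} ≡ n!·S_s^{(n+1)} (mod p^{a+1})` for `r = p^a(p−1)+l`, `s = p^b(p−1)+l`. -/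
theorem stirling_congruence
    (p : ℕ) (hp : p.Prime) (hodd : p ≠ 2) (l n : ℕ) (hl : 1 ≤ l)
    (a b : ℕ) (hab : a ≤ b) (r s : ℕ)
    (hr : r = p ^ a * (p - 1) + l) (hs : s = p ^ b * (p - 1) + l) :
    (∑ j ∈ Finset.range (n + 1),
        (n.choose j : ℤ) * (-1) ^ (n + j) * ((j : ℤ) + 1) ^ (r - 1)) ≡
    (∑ j ∈ Finset.range (n + 1),
        (n.choose j : ℤ) * (-1) ^ (n + j) * ((j : ℤ) + 1) ^ (s - 1))
      [ZMOD ((p : ℤ) ^ (a + 1))] := by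
  subst hr hs
  refine Int.ModEq.sum fun j _ => Int.ModEq.mul_left _ ?_
  have h := (Int.natCast_modEq_iff).2 (term_aux p hp (j + 1) a b l hab hl)
  push_cast at h
  exact h
end

section
/- Let p ≥ 5 be a prime, let l ≥ 1 be an odd integer with l ≢ −1 (mod p−1), let 0 ≤ a ≤ b be integers, and set r = p^a(p−1) + l and s = p^b(p−1) + l. Then |(1−p^r)·B_{r+1}/(r+1) − (1−p^s)·B_{s+1}/(s+1)|_p ≤ p^{−(a+1)}, where |·|_p is the p-adic absolute value on ℚ. -/
open Filter Topology Finset in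
theorem kummer_aux_tendsto_sum (p : ℕ) [Fact p.Prime] (m : ℕ) :
    Tendsto (fun k : ℕ => (∑ j ∈ range (p ^ k), (j : ℚ_[p]) ^ m) / (p : ℚ_[p]) ^ k) atTop
      (𝓝 ((bernoulli m : ℚ) : ℚ_[p])) := by
  have hp0 : (p : ℚ_[p]) ≠ 0 := by exact_mod_cast (Fact.out : p.Prime).ne_zero
  have hpk : Tendsto (fun k : ℕ => (p : ℚ_[p]) ^ k) atTop (𝓝 0) :=
    tendsto_pow_atTop_nhds_zero_of_norm_lt_one Padic.norm_p_lt_one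
  let F : ℚ_[p] → ℚ_[p] := fun x => ∑ i ∈ range (m + 1),
    ((bernoulli i : ℚ) : ℚ_[p]) * ((m + 1).choose i : ℚ_[p]) * x ^ (m - i) / ((m : ℚ_[p]) + 1)
  have hF : Continuous F := by
    apply continuous_finsetSum
    intro i _
    fun_prop
  have hm : ((m : ℚ_[p]) + 1) ≠ 0 := by exact_mod_cast Nat.succ_ne_zero m
  have hF0 : F 0 = ((bernoulli m : ℚ) : ℚ_[p]) := by
    simp only [F]
    rw [sum_range_succ, sum_eq_zero]
    · simp
      field_simp
    · intro i hi
      rw [mem_range] at hi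
      rw [zero_pow (by omega)]
      simp
  have h1 := (hF.tendsto 0).comp hpk
  rw [hF0] at h1
  refine h1.congr ?_
  intro k
  have h2 := congrArg (fun x : ℚ => (x : ℚ_[p])) (sum_range_pow (p ^ k) m)
  push_cast at h2
  simp only [Function.comp, F]
  rw [h2, sum_div]
  apply sum_congr rfl
  intro i hi
  rw [mem_range] at hi
  have : m + 1 - i = (m - i) + 1 := by omega
  rw [this, pow_succ]
  field_simp

/-- residues below `p^k` prime to `p` -/
def kummerT (p k : ℕ) : Finset ℕ := (Finset.range (p ^ k)).filter (fun j => ¬ p ∣ j)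

open Finset in
theorem kummer_aux_split (p : ℕ) [Fact p.Prime] (m k : ℕ) :
    ∑ j ∈ kummerT p (k + 1), (j : ℚ_[p]) ^ m
      = ∑ j ∈ range (p ^ (k + 1)), (j : ℚ_[p]) ^ m
        - (p : ℚ_[p]) ^ m * ∑ j ∈ range (p ^ k), (j : ℚ_[p]) ^ m := by
  have hp0 : 0 < p := (Fact.out : p.Prime).pos
  rw [eq_sub_iff_add_eq, kummerT,
    ← sum_filter_add_sum_filter_not (range (p ^ (k + 1))) (fun j => ¬ p ∣ j)]
  congr 1
  rw [mul_sum]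
  refine sum_nbij (fun j => p * j) ?_ ?_ ?_ ?_
  · intro j hj
    simp only [mem_range, mem_filter] at hj ⊢
    refine ⟨?_, by simp⟩
    rw [pow_succ, mul_comm]
    exact Nat.mul_lt_mul_of_pos_right hj hp0
  · intro x _ y _ h
    exact Nat.eq_of_mul_eq_mul_left hp0 h
  · intro y hy
    simp only [coe_filter, mem_range, Set.mem_ofPred_eq, not_not] at hy
    obtain ⟨h1, x, rfl⟩ := hy
    refine ⟨x, ?_, rfl⟩
    simp only [coe_range, Set.mem_Iio]
    rw [pow_succ, mul_comm] at h1
    exact Nat.lt_of_mul_lt_mul_right h1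
  · intro j _
    push_cast
    ring

open Finset in
theorem kummer_aux_perm (p : ℕ) (hp : p.Prime) (c k : ℕ) (hc : ¬ p ∣ c) (f : ℕ → ℤ) :
    ∑ j ∈ kummerT p k, f (c * j % p ^ k) = ∑ j ∈ kummerT p k, f j := by
  have hcop : Nat.Coprime (p ^ k) c := Nat.Coprime.pow_left k ((hp.coprime_iff_not_dvd).2 hc)
  have hmaps : ∀ j ∈ kummerT p k, c * j % p ^ k ∈ kummerT p k := by
    intro j hj
    simp only [kummerT, mem_filter, mem_range] at hj ⊢
    refine ⟨Nat.mod_lt _ (pow_pos hp.pos k), ?_⟩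
    rcases k with _ | k
    · simp at hj
      exact absurd hj.1 (by rintro rfl; simp at hj)
    · rw [Nat.dvd_mod_iff (dvd_pow_self p (Nat.succ_ne_zero k))]
      rw [hp.dvd_mul]
      tauto
  have hinj : Set.InjOn (fun j => c * j % p ^ k) (kummerT p k : Set ℕ) := by
    intro x hx y hy h
    simp only [kummerT, coe_filter, mem_range, Set.mem_ofPred_eq] at hx hy
    have h' : c * x ≡ c * y [MOD p ^ k] := h
    have h'' := Nat.ModEq.cancel_left_of_coprime hcop h'
    exact Nat.ModEq.eq_of_lt_of_lt h'' hx.1 hy.1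
  refine sum_nbij (fun j => c * j % p ^ k) hmaps hinj ?_ (fun _ _ => rfl)
  exact surjOn_of_injOn_of_card_le _ hmaps hinj le_rfl

/-- the Voronoi type sum -/
def kummerS (p c m k : ℕ) : ℤ :=
  ∑ j ∈ kummerT p k, ((c * j / p ^ k : ℕ) : ℤ) * ((c * j % p ^ k : ℕ) : ℤ) ^ m

theorem kummer_aux_binom (x y : ℤ) (m : ℕ) :
    y ^ 2 ∣ (x + y) ^ (m + 1) - x ^ (m + 1) - (m + 1) * y * x ^ m := by
  induction m with
  | zero => simp
  | succ m ih =>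
    obtain ⟨d, hd⟩ := ih
    refine ⟨d * (x + y) + (m + 1) * x ^ m, ?_⟩
    have : (x + y) ^ (m + 1) = y ^ 2 * d + x ^ (m + 1) + (m + 1) * y * x ^ m := by linarith
    rw [pow_succ (x + y), this]
    push_cast
    ring

open Finset in
theorem kummer_aux_voronoi (p : ℕ) (hp : p.Prime) (c k m : ℕ) (hc : ¬ p ∣ c) :
    ((p : ℤ) ^ k) ^ 2 ∣ ((c : ℤ) ^ (m + 1) - 1) * ∑ j ∈ kummerT p k, (j : ℤ) ^ (m + 1)
      - (m + 1) * (p : ℤ) ^ k * kummerS p c m k := by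
  have h := kummer_aux_perm p hp c k hc (fun j => (j : ℤ) ^ (m + 1))
  rw [sub_mul, one_mul, mul_sum, ← h, kummerS, mul_sum, ← sum_sub_distrib, ← sum_sub_distrib]
  apply dvd_sum
  intro j _
  have hb := kummer_aux_binom ((c * j % p ^ k : ℕ) : ℤ) ((p : ℤ) ^ k * (c * j / p ^ k : ℕ)) m
  have hdiv : ((c * j % p ^ k : ℕ) : ℤ) + (p : ℤ) ^ k * (c * j / p ^ k : ℕ) = c * j := by
    exact_mod_cast Nat.mod_add_div (c * j) (p ^ k)
  rw [hdiv] at hb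
  refine (Dvd.intro _ (mul_pow _ _ 2).symm).trans (hb.trans (dvd_of_eq ?_))
  ring

open Filter Topology Finset in
theorem kummer_aux_limit (p : ℕ) [Fact p.Prime] (c m : ℕ) (hc : ¬ p ∣ c) :
    Tendsto (fun k : ℕ => ((kummerS p c m (k + 1) : ℤ) : ℚ_[p])) atTop
      (𝓝 (((c : ℚ_[p]) ^ (m + 1) - 1) *
        ((1 - (p : ℚ_[p]) ^ m) * ((bernoulli (m + 1) : ℚ) : ℚ_[p]) / ((m : ℚ_[p]) + 1)))) := by
  have hp : p.Prime := Fact.out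
  have hp0 : (p : ℚ_[p]) ≠ 0 := by exact_mod_cast hp.ne_zero
  have hm : ((m : ℚ_[p]) + 1) ≠ 0 := by exact_mod_cast Nat.succ_ne_zero m
  have hpk : Tendsto (fun k : ℕ => (p : ℚ_[p]) ^ (k + 1)) atTop (𝓝 0) :=
    (tendsto_pow_atTop_nhds_zero_of_norm_lt_one Padic.norm_p_lt_one).comp
      (tendsto_add_atTop_nat 1)
  have hA := kummer_aux_tendsto_sum p (m + 1)
  have hA1 := hA.comp (tendsto_add_atTop_nat 1)
  have hT : Tendsto (fun k : ℕ => (∑ j ∈ kummerT p (k + 1), (j : ℚ_[p]) ^ (m + 1))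
      / (p : ℚ_[p]) ^ (k + 1)) atTop
      (𝓝 ((1 - (p : ℚ_[p]) ^ m) * ((bernoulli (m + 1) : ℚ) : ℚ_[p]))) := by
    have := hA1.sub (hA.const_mul ((p : ℚ_[p]) ^ m))
    rw [sub_mul, one_mul]
    refine this.congr ?_
    intro k
    rw [kummer_aux_split]
    simp only [Function.comp]
    rw [pow_succ (p : ℚ_[p]) k, pow_succ (p : ℚ_[p]) m]
    field_simp
  choose d hd using fun k => kummer_aux_voronoi p hp c (k + 1) m hc
  have hE : Tendsto (fun k : ℕ => (p : ℚ_[p]) ^ (k + 1) * (d k : ℚ_[p])) atTop (𝓝 0) := by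
    apply squeeze_zero_norm (a := fun k => ‖(p : ℚ_[p]) ^ (k + 1)‖)
    · intro k
      rw [norm_mul]
      exact mul_le_of_le_one_right (norm_nonneg _) (Padic.norm_int_le_one _)
    · simpa using hpk.norm
  have hfin := ((hT.const_mul ((c : ℚ_[p]) ^ (m + 1) - 1)).sub hE).div_const ((m : ℚ_[p]) + 1)
  rw [sub_zero, mul_div_assoc] at hfin
  refine hfin.congr ?_
  intro k
  have h2 := congrArg (fun x : ℤ => (x : ℚ_[p])) (hd k)
  push_cast at h2
  rw [div_eq_iff hm]
  have hpk0 : (p : ℚ_[p]) ^ (k + 1) ≠ 0 := pow_ne_zero _ hp0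
  rw [mul_div_assoc', sub_eq_iff_eq_add, div_eq_iff hpk0]
  linear_combination h2

theorem kummer_aux_pow (p : ℕ) (hp : p.Prime) (a m t x : ℕ) (hx : ¬ p ∣ x) :
    ((p : ℤ) ^ (a + 1)) ∣ (x : ℤ) ^ (m + p ^ a * (p - 1) * t) - (x : ℤ) ^ m := by
  have hcop : Nat.Coprime x (p ^ (a + 1)) :=
    (Nat.Coprime.pow_left (a + 1) ((hp.coprime_iff_not_dvd).2 hx)).symm
  have h := Nat.ModEq.pow_totient hcop
  rw [Nat.totient_prime_pow_succ hp] at h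
  have h2 := ((h.pow t).mul_left (x ^ m)).symm
  rw [one_pow, mul_one, ← pow_mul, ← pow_add] at h2
  have h3 := (Nat.modEq_iff_dvd).1 h2
  push_cast at h3
  exact h3

open Finset in
theorem kummer_aux_S (p : ℕ) (hp : p.Prime) (c k a m t : ℕ) (hc : ¬ p ∣ c) :
    ((p : ℤ) ^ (a + 1)) ∣
      kummerS p c (m + p ^ a * (p - 1) * t) (k + 1) - kummerS p c m (k + 1) := by
  rw [kummerS, kummerS, ← sum_sub_distrib]
  apply dvd_sum
  intro j hj
  simp only [kummerT, mem_filter, mem_range] at hj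
  rw [← mul_sub]
  apply Dvd.dvd.mul_left
  apply kummer_aux_pow p hp
  rw [Nat.dvd_mod_iff (dvd_pow_self p (Nat.succ_ne_zero k)), hp.dvd_mul]
  tauto

theorem kummer_aux_root (p : ℕ) [Fact p.Prime] :
    ∃ c : ℕ, ¬ p ∣ c ∧ ∀ m : ℕ, ¬ (p - 1) ∣ m → ¬ (p : ℤ) ∣ (c : ℤ) ^ m - 1 := by
  obtain ⟨g, hg⟩ := IsCyclic.exists_generator (α := (ZMod p)ˣ)
  have ho := orderOf_eq_card_of_forall_mem_zpowers hg
  rw [Nat.card_eq_fintype_card, ZMod.card_units] at ho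
  refine ⟨(g : ZMod p).val, ?_, ?_⟩
  · intro h
    rw [← ZMod.natCast_eq_zero_iff, ZMod.natCast_zmod_val] at h
    exact g.ne_zero h
  · intro m hm h
    apply hm
    rw [← ZMod.intCast_zmod_eq_zero_iff_dvd] at h
    push_cast at h
    rw [ZMod.natCast_zmod_val, sub_eq_zero] at h
    rw [← ho]
    apply orderOf_dvd_of_pow_eq_one
    apply Units.ext
    rw [Units.val_pow_eq_pow_val, Units.val_one]
    exact h

open Filter Topology in
theorem kummer_aux_main (p : ℕ) [Fact p.Prime] (a m t : ℕ) (hm : ¬ (p - 1) ∣ m + 1) :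
    ‖(1 - (p : ℚ_[p]) ^ m) * ((bernoulli (m + 1) : ℚ) : ℚ_[p]) / ((m : ℚ_[p]) + 1)
      - (1 - (p : ℚ_[p]) ^ (m + p ^ a * (p - 1) * t)) *
        ((bernoulli (m + p ^ a * (p - 1) * t + 1) : ℚ) : ℚ_[p]) /
          (((m + p ^ a * (p - 1) * t : ℕ) : ℚ_[p]) + 1)‖ ≤ (p : ℝ) ^ (-((a : ℤ) + 1)) := by
  have hp : p.Prime := Fact.out
  obtain ⟨c, hc, hcm⟩ := kummer_aux_root p
  set n := m + p ^ a * (p - 1) * t with hn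
  have L1 := kummer_aux_limit p c m hc
  have L2 := kummer_aux_limit p c n hc
  set X := (1 - (p : ℚ_[p]) ^ m) * ((bernoulli (m + 1) : ℚ) : ℚ_[p]) / ((m : ℚ_[p]) + 1)
  set Y := (1 - (p : ℚ_[p]) ^ n) * ((bernoulli (n + 1) : ℚ) : ℚ_[p]) / ((n : ℚ_[p]) + 1)
  have key : ∀ z : ℤ, (p : ℤ) ^ (a + 1) ∣ z → ‖(z : ℚ_[p])‖ ≤ (p : ℝ) ^ (-((a : ℤ) + 1)) := by
    intro z hz
    have := (Padic.norm_int_le_pow_iff_dvd (p := p) z (a + 1)).2 (by exact_mod_cast hz)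
    exact_mod_cast this
  have hcX : ‖(c : ℚ_[p]) ^ (m + 1) - 1‖ = 1 := by
    have h1 := Padic.norm_int_le_one (p := p) ((c : ℤ) ^ (m + 1) - 1)
    have h2 := mt (Padic.norm_intCast_lt_one_iff (p := p) (k := (c : ℤ) ^ (m + 1) - 1)).1
      (hcm _ hm)
    push_cast at h1 h2
    exact le_antisymm h1 (not_lt.1 h2)
  have hX : ‖X‖ ≤ 1 := by
    have : ‖((c : ℚ_[p]) ^ (m + 1) - 1) * X‖ ≤ 1 :=
      le_of_tendsto L1.norm (Eventually.of_forall fun k => Padic.norm_int_le_one _)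
    rwa [norm_mul, hcX, one_mul] at this
  have hcn : ‖(c : ℚ_[p]) ^ (n + 1) - (c : ℚ_[p]) ^ (m + 1)‖ ≤ (p : ℝ) ^ (-((a : ℤ) + 1)) := by
    have h := kummer_aux_pow p hp a (m + 1) t c hc
    have h' := key _ h
    push_cast at h'
    rwa [show m + 1 + p ^ a * (p - 1) * t = n + 1 by omega] at h'
  have hcY : ‖(c : ℚ_[p]) ^ (n + 1) - 1‖ = 1 := by
    have hnn : ¬ (p - 1) ∣ n + 1 := by
      intro h
      apply hm
      rw [show n + 1 = (m + 1) + (p - 1) * (p ^ a * t) by rw [hn]; ring] at h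
      exact (Nat.dvd_add_left (dvd_mul_right _ _)).1 h
    have h1 := Padic.norm_int_le_one (p := p) ((c : ℤ) ^ (n + 1) - 1)
    have h2 := mt (Padic.norm_intCast_lt_one_iff (p := p) (k := (c : ℤ) ^ (n + 1) - 1)).1
      (hcm _ hnn)
    push_cast at h1 h2
    exact le_antisymm h1 (not_lt.1 h2)
  have hD : ‖((c : ℚ_[p]) ^ (n + 1) - 1) * Y - ((c : ℚ_[p]) ^ (m + 1) - 1) * X‖
      ≤ (p : ℝ) ^ (-((a : ℤ) + 1)) := by
    refine le_of_tendsto (L2.sub L1).norm (Eventually.of_forall fun k => ?_)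
    have := key _ (kummer_aux_S p hp c k a m t hc)
    push_cast at this
    exact this
  have heq : ((c : ℚ_[p]) ^ (n + 1) - 1) * (X - Y)
      = ((c : ℚ_[p]) ^ (n + 1) - (c : ℚ_[p]) ^ (m + 1)) * X
        - (((c : ℚ_[p]) ^ (n + 1) - 1) * Y - ((c : ℚ_[p]) ^ (m + 1) - 1) * X) := by ring
  have : ‖X - Y‖ = ‖((c : ℚ_[p]) ^ (n + 1) - 1) * (X - Y)‖ := by
    rw [norm_mul, hcY, one_mul]
  rw [this, heq, sub_eq_add_neg]
  refine (Padic.nonarchimedean _ _).trans (max_le ?_ ?_)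
  · rw [norm_mul]
    exact (mul_le_of_le_one_right (norm_nonneg _) hX).trans hcn
  · rw [norm_neg]
    exact hD


/-- Lemma 3.7: via Kummer's congruences,
`|(1−p^r)B_{r+1}/(r+1) − (1−p^s)B_{s+1}/(s+1)|_p ≤ p^{−(a+1)}`
for `r = p^a(p−1)+l`, `s = p^b(p−1)+l`, `l ≥ 1` odd with `l ≢ −1 (mod p−1)`. -/
theorem bernoulli_kummer_estimate
    (p : ℕ) (hp : p.Prime) (hp5 : 5 ≤ p)
    (l : ℕ) (hl : 1 ≤ l) (hlodd : Odd l)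
    (hlne : ¬ ((l : ℤ) ≡ -1 [ZMOD ((p : ℤ) - 1)]))
    (a b : ℕ) (hab : a ≤ b) (r s : ℕ)
    (hr : r = p ^ a * (p - 1) + l) (hs : s = p ^ b * (p - 1) + l) :
    padicNorm p
        ((1 - (p : ℚ) ^ r) * bernoulli (r + 1) / ((r : ℚ) + 1)
          - (1 - (p : ℚ) ^ s) * bernoulli (s + 1) / ((s : ℚ) + 1))
      ≤ (p : ℚ) ^ (-((a : ℤ) + 1)) := by
  haveI : Fact p.Prime := ⟨hp⟩
  obtain ⟨e, rfl⟩ := Nat.exists_eq_add_of_le hab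
  have hpe : 1 ≤ p ^ e := Nat.one_le_pow _ _ hp.pos
  have hs' : s = r + p ^ a * (p - 1) * (p ^ e - 1) := by
    obtain ⟨u, hu⟩ := Nat.exists_eq_add_of_le hpe
    rw [hs, hr, pow_add, hu, Nat.add_sub_cancel_left]
    ring
  have hm : ¬ (p - 1) ∣ r + 1 := by
    intro h
    apply hlne
    rw [hr, show p ^ a * (p - 1) + l + 1 = (l + 1) + (p - 1) * p ^ a by ring] at h
    have h1 := (Nat.dvd_add_left (dvd_mul_right _ _)).1 h
    have h2 : ((p - 1 : ℕ) : ℤ) ∣ ((l + 1 : ℕ) : ℤ) := by exact_mod_cast h1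
    push_cast [Nat.cast_sub hp.one_le] at h2
    refine ((Int.modEq_iff_dvd).2 ?_).symm
    simpa using h2
  have h := kummer_aux_main p a r (p ^ e - 1) hm
  rw [← hs'] at h
  have h2 : ‖(((1 - (p : ℚ) ^ r) * bernoulli (r + 1) / ((r : ℚ) + 1)
          - (1 - (p : ℚ) ^ s) * bernoulli (s + 1) / ((s : ℚ) + 1) : ℚ) : ℚ_[p])‖
      ≤ (p : ℝ) ^ (-((a : ℤ) + 1)) := by
    push_cast
    exact h
  rw [Padic.eq_padicNorm] at h2
  have h3 : (p : ℝ) ^ (-((a : ℤ) + 1)) = (((p : ℚ) ^ (-((a : ℤ) + 1)) : ℚ) : ℝ) := by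
    rw [Rat.cast_zpow, Rat.cast_natCast]
  rw [h3] at h2
  exact Rat.cast_le.1 h2
end

section
/- Let R be a commutative ring and let c, g ∈ R. Define F : ℕ → R by F(0) = 1, F(1) = c, and F(t) = c·F(t−1) + 2(t−1)·g·F(t−2) for t ≥ 2. Then for every t ≥ 0, F(t) = Σ_{k=0}^{⌊t/2⌋} C(t,2k) · ((2k)!/k!) · c^{t−2k} · g^k, where (2k)!/k! denotes the integer 2^k·(2k−1)!!. -/
theorem lcr_term_zero {R : Type*} [CommRing R] (c g : R) (t k : ℕ) (h : t < 2 * k) :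
    (t.choose (2 * k) : R) * ((2 ^ k * Nat.doubleFactorial (2 * k - 1) : ℕ) : R) *
        c ^ (t - 2 * k) * g ^ k = 0 := by
  rw [Nat.choose_eq_zero_of_lt h]; simp

theorem lcr_extend {R : Type*} [CommRing R] (c g : R) (t N : ℕ) (h : t / 2 + 1 ≤ N) :
    ∑ k ∈ Finset.range (t / 2 + 1),
      (t.choose (2 * k) : R) * ((2 ^ k * Nat.doubleFactorial (2 * k - 1) : ℕ) : R) *
        c ^ (t - 2 * k) * g ^ k =
    ∑ k ∈ Finset.range N,
      (t.choose (2 * k) : R) * ((2 ^ k * Nat.doubleFactorial (2 * k - 1) : ℕ) : R) *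
        c ^ (t - 2 * k) * g ^ k := by
  apply Finset.sum_subset
  · exact Finset.range_mono h
  · intro k _ hk
    apply lcr_term_zero
    simp only [Finset.mem_range] at hk
    omega

theorem lcr_df (k : ℕ) : Nat.doubleFactorial (2 * (k + 1) - 1)
    = (2 * k + 1) * Nat.doubleFactorial (2 * k - 1) := by
  rcases k with _ | k
  · simp
  · have h1 : 2 * (k + 1 + 1) - 1 = (2 * k + 1) + 2 := by omega
    have h2 : 2 * (k + 1) - 1 = 2 * k + 1 := by omega
    rw [h1, h2, Nat.doubleFactorial_add_two]
    ring

theorem lcr_step {R : Type*} [CommRing R] (c g : R) (n k : ℕ) :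
    ((n + 2).choose (2 * (k + 1)) : R) *
        ((2 ^ (k + 1) * Nat.doubleFactorial (2 * (k + 1) - 1) : ℕ) : R) *
        c ^ (n + 2 - 2 * (k + 1)) * g ^ (k + 1) =
    c * (((n + 1).choose (2 * (k + 1)) : R) *
        ((2 ^ (k + 1) * Nat.doubleFactorial (2 * (k + 1) - 1) : ℕ) : R) *
        c ^ (n + 1 - 2 * (k + 1)) * g ^ (k + 1)) +
    2 * ((n + 1 : ℕ) : R) * g * ((n.choose (2 * k) : R) *
        ((2 ^ k * Nat.doubleFactorial (2 * k - 1) : ℕ) : R) *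
        c ^ (n - 2 * k) * g ^ k) := by
  have e1 : ((n + 2).choose (2 * (k + 1)) : R)
      = ((n + 1).choose (2 * k + 1) : R) + ((n + 1).choose (2 * (k + 1)) : R) := by
    rw [← Nat.cast_add]; congr 1
  have e2 : ((n + 1 : ℕ) : R) * (n.choose (2 * k) : R)
      = ((n + 1).choose (2 * k + 1) : R) * (2 * (k : R) + 1) := by
    have := congrArg (Nat.cast : ℕ → R) (Nat.add_one_mul_choose_eq n (2 * k))
    push_cast at this ⊢
    exact this
  have e3 : n + 2 - 2 * (k + 1) = n - 2 * k := by omega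
  have e4 : ((n + 1).choose (2 * (k + 1)) : R) * c ^ (n - 2 * k)
      = c * (((n + 1).choose (2 * (k + 1)) : R) * c ^ (n + 1 - 2 * (k + 1))) := by
    by_cases h : n + 1 < 2 * (k + 1)
    · rw [Nat.choose_eq_zero_of_lt h]; simp
    · have : n - 2 * k = (n + 1 - 2 * (k + 1)) + 1 := by omega
      rw [this, pow_succ]; ring
  rw [e1, e3, lcr_df]
  generalize c ^ (n + 1 - 2 * (k + 1)) = y at *
  generalize c ^ (n - 2 * k) = x at *
  generalize ((n + 1).choose (2 * (k + 1)) : R) = A at *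
  generalize ((n + 1).choose (2 * k + 1) : R) = B at *
  generalize (n.choose (2 * k) : R) = C at *
  generalize ((n + 1 : ℕ) : R) = m at *
  push_cast
  generalize (Nat.doubleFactorial (2 * k - 1) : R) = D at *
  linear_combination (2 ^ (k + 1) * (2 * (k : R) + 1) * D * g ^ (k + 1)) * e4
    - (2 * g * 2 ^ k * D * x * g ^ k) * e2

/-- The inductive content of Lemma 4.2: the solution of the recursion
`F(t) = c·F(t−1) + 2(t−1)·g·F(t−2)`, `F(0) = 1`, `F(1) = c`, is
`F(t) = ∑_{k=0}^{⌊t/2⌋} C(t,2k)·(2k)!/k!·c^{t−2k}·g^k`, where `(2k)!/k! = 2^k(2k−1)!!`. -/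
theorem lattice_character_recursion_closed_form
    {R : Type*} [CommRing R] (c g : R) (F : ℕ → R)
    (hF0 : F 0 = 1) (hF1 : F 1 = c)
    (hFt : ∀ t : ℕ, 2 ≤ t →
      F t = c * F (t - 1) + 2 * ((t - 1 : ℕ) : R) * g * F (t - 2)) :
    ∀ t : ℕ, F t = ∑ k ∈ Finset.range (t / 2 + 1),
      (t.choose (2 * k) : R) * ((2 ^ k * Nat.doubleFactorial (2 * k - 1) : ℕ) : R) *
        c ^ (t - 2 * k) * g ^ k := by
  intro t
  induction t using Nat.strong_induction_on with
  | _ t ih =>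
    rcases t with _ | _ | n
    · simp [hF0]
    · simp [hF1]
    · have h := hFt (n + 2) (by omega)
      have s1 : n + 2 - 1 = n + 1 := by omega
      have s2 : n + 2 - 2 = n := by omega
      rw [s1, s2, ih (n + 1) (by omega), ih n (by omega),
        lcr_extend c g (n + 1) (n / 2 + 1 + 1) (by omega)] at h
      change F (n + 2) = _
      have s3 : (n + 1 + 1) / 2 + 1 = n / 2 + 1 + 1 := by omega
      rw [h, s3, Finset.sum_range_succ', Finset.sum_range_succ' _ (n / 2 + 1),
        Finset.sum_congr rfl (fun k _ => lcr_step c g n k), Finset.sum_add_distrib,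
        ← Finset.mul_sum, ← Finset.mul_sum]
      simp [pow_succ]
      ring
end

section
/- Let p be a prime and let l ≥ 1 and n ≥ 1 be integers. Then, in the ring ℤ_p of p-adic integers, the sequence a ↦ Σ_{d ∣ n} d^{p^a(p−1)+l} converges as a → ∞ to σ_l^⋆(n) := Σ_{d ∣ n, p ∤ d} d^l. -/
theorem sigma_aux_unit (p : ℕ) [hp : Fact p.Prime] (d : ℕ) (hd : ¬ p ∣ d) :
    Filter.Tendsto (fun a : ℕ => (d : ℤ_[p]) ^ (p ^ a * (p - 1))) Filter.atTop (nhds 1) := by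
  have hpn : IsCoprime (d : ℤ) (p : ℤ) :=
    Nat.isCoprime_iff_coprime.mpr ((Nat.Prime.coprime_iff_not_dvd hp.out).mpr hd).symm
  have h0 : (p : ℤ) ∣ (d : ℤ) ^ (p - 1) - 1 :=
    (Int.ModEq.pow_card_sub_one_eq_one hp.out hpn).symm.dvd
  have h1 : (p : ℤ_[p]) ∣ (d : ℤ_[p]) ^ (p - 1) - 1 := by
    have := map_dvd (Int.castRingHom ℤ_[p]) h0
    simpa using this
  have hlt : ‖(p : ℤ_[p])‖ < 1 := (PadicInt.norm_lt_one_iff_dvd _).mpr dvd_rfl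
  have ht : Filter.Tendsto (fun a : ℕ => ‖(p : ℤ_[p])‖ ^ (a + 1)) Filter.atTop (nhds 0) :=
    (Filter.tendsto_add_atTop_iff_nat 1).mpr
      (tendsto_pow_atTop_nhds_zero_of_lt_one (norm_nonneg _) hlt)
  rw [tendsto_iff_norm_sub_tendsto_zero]
  refine squeeze_zero (fun _ => norm_nonneg _) (fun a => ?_) ht
  obtain ⟨c, hc⟩ := dvd_sub_pow_of_dvd_sub h1 a
  rw [one_pow, ← pow_mul, mul_comm (p - 1)] at hc
  rw [hc, norm_mul, norm_pow]
  exact mul_le_of_le_one_right (by positivity) (PadicInt.norm_le_one c)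

theorem sigma_aux_nonunit (p : ℕ) [hp : Fact p.Prime] (l d : ℕ) (hd : p ∣ d) :
    Filter.Tendsto (fun a : ℕ => (d : ℤ_[p]) ^ (p ^ a * (p - 1) + l))
      Filter.atTop (nhds 0) := by
  have h1 : (p : ℤ_[p]) ∣ (d : ℤ_[p]) := Nat.cast_dvd_cast hd
  have hlt : ‖(d : ℤ_[p])‖ < 1 := (PadicInt.norm_lt_one_iff_dvd _).mpr h1
  refine (tendsto_pow_atTop_nhds_zero_of_norm_lt_one hlt).comp ?_
  refine Filter.tendsto_atTop_mono (fun a => ?_) Filter.tendsto_id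
  have h2 := (Nat.lt_pow_self hp.out.one_lt : a < p ^ a)
  have h3 : 1 ≤ p - 1 := Nat.le_sub_one_of_lt hp.out.one_lt
  have := Nat.le_mul_of_pos_right (p ^ a) h3
  simp only [id]
  omega

/-- The Fourier coefficients `σ_r(n)` of the classical Eisenstein series `G_{r+1}` with
`r = p^a(p−1)+l` converge p-adically to `σ_l^⋆(n) = Σ_{d∣n, p∤d} d^l`. -/
theorem sigma_padic_limit
    (p : ℕ) [Fact p.Prime] (l n : ℕ) (hl : 1 ≤ l) (hn : 1 ≤ n) :
    Filter.Tendsto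
      (fun a : ℕ => ∑ d ∈ n.divisors, (d : ℤ_[p]) ^ (p ^ a * (p - 1) + l))
      Filter.atTop
      (nhds (∑ d ∈ n.divisors.filter (fun d => ¬ p ∣ d), (d : ℤ_[p]) ^ l)) := by
  rw [Finset.sum_filter]
  refine tendsto_finsetSum _ (fun d _ => ?_)
  by_cases hd : p ∣ d
  · simpa [hd] using sigma_aux_nonunit p l d hd
  · simpa [hd, pow_add] using (sigma_aux_unit p d hd).mul_const ((d : ℤ_[p]) ^ l)
end

section
/- Let p ≥ 5 be a prime. Then, in ℚ_p, the sequence m ↦ −B_{2+p^m(p−1)}/(2·(2+p^m(p−1))) converges as m → ∞ to (p−1)/24. -/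
open Finset in
lemma eis_faulhaber (p : ℕ) [Fact p.Prime] (N k : ℕ) :
    ∑ a ∈ range N, (a : ℚ_[p]) ^ k =
      (N : ℚ_[p]) * ((bernoulli k : ℚ) : ℚ_[p]) +
      ∑ i ∈ range k, (N : ℚ_[p]) * (((bernoulli i : ℚ) : ℚ_[p]) * ((k.choose i : ℕ) : ℚ_[p]) *
        ((N : ℚ_[p]) ^ (k - i) / (((k - i) + 1 : ℕ) : ℚ_[p]))) := by
  have h : ∑ a ∈ range N, (a : ℚ) ^ k = (N : ℚ) * bernoulli k +
      ∑ i ∈ range k, (N : ℚ) * (bernoulli i * ((k.choose i : ℕ) : ℚ) *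
        ((N : ℚ) ^ (k - i) / (((k - i) + 1 : ℕ) : ℚ))) := by
    rw [sum_range_pow, sum_range_succ, add_comm]
    have hk : (k : ℚ) + 1 ≠ 0 := by positivity
    congr 1
    · simp only [Nat.choose_succ_self_right, Nat.add_sub_cancel_left]
      push_cast
      field_simp
    · apply sum_congr rfl
      intro i hi
      have hi' : i < k := mem_range.1 hi
      have h1 := Nat.choose_mul_succ_eq k i
      have h2 : k + 1 - i = (k - i) + 1 := by omega
      rw [h2] at h1 ⊢
      have h3 : ((k.choose i : ℕ) : ℚ) * (k + 1) = ((k+1).choose i : ℕ) * ((k - i + 1 : ℕ) : ℚ) := by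
        exact_mod_cast h1
      have h4 : ((k - i + 1 : ℕ) : ℚ) ≠ 0 := by positivity
      have h5 : (((k+1).choose i : ℕ) : ℚ) = (k.choose i : ℕ) * (k + 1) / ((k - i + 1 : ℕ) : ℚ) := by
        rw [h3]; field_simp
      rw [h5, pow_succ]
      field_simp
  have := congrArg (fun x : ℚ => (x : ℚ_[p])) h
  push_cast at this ⊢
  exact this

lemma eis_term (p : ℕ) [Fact p.Prime] (j : ℕ) (hj : 1 ≤ j) :
    ‖(p : ℚ_[p]) ^ j / ((j + 1 : ℕ) : ℚ_[p])‖ ≤ 1 := by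
  have hp : p.Prime := Fact.out
  rw [norm_div]
  have hne : ((j + 1 : ℕ) : ℚ_[p]) ≠ 0 := by exact_mod_cast Nat.succ_ne_zero j
  rw [div_le_one (norm_pos_iff.2 hne), Padic.norm_p_pow]
  by_contra hlt
  push Not at hlt
  have hp0 : (0:ℝ) < p := by exact_mod_cast hp.pos
  have h1 : ‖(((j + 1 : ℕ) : ℤ) : ℚ_[p])‖ ≤ (p : ℝ) ^ (-((j:ℕ)) : ℤ) := by
    simpa using hlt.le
  have h2 := (Padic.norm_int_le_pow_iff_dvd (p := p) _ _).1 h1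
  have h3 : p ^ j ∣ j + 1 := by exact_mod_cast h2
  have h4 := Nat.le_of_dvd (Nat.succ_pos j) h3
  have h5 : j < p ^ j := Nat.lt_pow_self hp.one_lt
  have h6 : p ^ j = j + 1 := by omega
  have h7 : ‖((j + 1 : ℕ) : ℚ_[p])‖ = (p:ℝ) ^ (-(j:ℤ)) := by
    rw [← h6]; push_cast; exact Padic.norm_p_pow j
  rw [h7] at hlt
  exact lt_irrefl _ hlt

lemma eis_nat_norm (p : ℕ) [Fact p.Prime] (n : ℕ) : ‖(n : ℚ_[p])‖ ≤ 1 := by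
  simpa using Padic.norm_int_le_one (p := p) (n : ℤ)

lemma eis_pB (p : ℕ) [Fact p.Prime] (k : ℕ) :
    ‖(p : ℚ_[p]) * ((bernoulli k : ℚ) : ℚ_[p])‖ ≤ 1 := by
  induction k using Nat.strong_induction_on with
  | _ k ih =>
    have h := eis_faulhaber p p k
    have h' := eq_sub_of_add_eq h.symm
    rw [h']
    rw [sub_eq_add_neg]
    refine (IsUltrametricDist.norm_add_le_max _ _).trans (max_le ?_ ?_)
    · exact_mod_cast eis_nat_norm p (∑ a ∈ Finset.range p, a ^ k)
    · rw [norm_neg]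
      apply IsUltrametricDist.norm_sum_le_of_forall_le_of_nonneg zero_le_one
      intro i hi
      have hi' : i < k := Finset.mem_range.1 hi
      rw [← mul_assoc, ← mul_assoc, norm_mul, norm_mul]
      refine mul_le_one₀ (mul_le_one₀ (ih i hi') (norm_nonneg _) (eis_nat_norm _ _))
        (norm_nonneg _) (eis_term p _ (by omega))

lemma eis_approx (p : ℕ) [Fact p.Prime] (n k : ℕ) :
    ‖((bernoulli k : ℚ) : ℚ_[p]) -
      (∑ a ∈ Finset.range (p ^ (n + 1)), (a : ℚ_[p]) ^ k) / (p : ℚ_[p]) ^ (n + 1)‖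
      ≤ (p : ℝ) * ((p : ℝ)⁻¹) ^ n := by
  have hp : p.Prime := Fact.out
  have hp0 : (p : ℚ_[p]) ≠ 0 := by exact_mod_cast hp.ne_zero
  have hpr : (0:ℝ) < p := by exact_mod_cast hp.pos
  have hp1 : (p:ℝ)⁻¹ ≤ 1 := inv_le_one_of_one_le₀ (by exact_mod_cast hp.one_lt.le)
  rw [eis_faulhaber p (p ^ (n + 1)) k, ← Finset.mul_sum]
  push_cast
  rw [← mul_add, mul_div_cancel_left₀ _ (pow_ne_zero _ hp0), sub_add_cancel_left, norm_neg]
  apply IsUltrametricDist.norm_sum_le_of_forall_le_of_nonneg (by positivity)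
  intro i hi
  have hi' : i < k := Finset.mem_range.1 hi
  obtain ⟨j, hj⟩ : ∃ j, k - i = j + 1 := ⟨k - i - 1, by omega⟩
  have ht := eis_term p (k - i) (by omega)
  have hB : ‖((bernoulli i : ℚ) : ℚ_[p])‖ ≤ p := by
    have := eis_pB p i
    rw [norm_mul, Padic.norm_p] at this
    rwa [inv_mul_le_iff₀ hpr, mul_one] at this
  have e : ((p : ℚ_[p]) ^ (n + 1)) ^ (k - i) / ((k - i : ℕ) + 1 : ℚ_[p]) =
      (p : ℚ_[p]) ^ (n * (k - i)) * ((p : ℚ_[p]) ^ (k - i) / ((k - i + 1 : ℕ) : ℚ_[p])) := by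
    push_cast
    rw [← pow_mul, add_mul, one_mul, pow_add, mul_div_assoc]
  rw [e, norm_mul, norm_mul, norm_mul, norm_pow, Padic.norm_p]
  refine mul_le_mul ?_ ?_ (by positivity) (by positivity)
  · calc _ ≤ (p:ℝ) * 1 := mul_le_mul hB (eis_nat_norm _ _) (norm_nonneg _) hpr.le
      _ = p := mul_one _
  · calc _ ≤ ((p:ℝ)⁻¹) ^ n * 1 := by
          refine mul_le_mul ?_ ht (norm_nonneg _) (by positivity)
          exact pow_le_pow_of_le_one (by positivity) hp1 (Nat.le_mul_of_pos_right _ (by omega))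
      _ = _ := mul_one _

lemma eis_filter {R : Type*} [CommRing R] (q M : ℕ) (f : ℕ → R) :
    ∑ a ∈ Finset.range ((q + 1) * M), (if (q + 1) ∣ a then 0 else f a) =
      ∑ a ∈ Finset.range ((q + 1) * M), f a - ∑ b ∈ Finset.range M, f ((q + 1) * b) := by
  induction M with
  | zero => simp
  | succ M ih =>
    rw [Nat.mul_succ, Finset.sum_range_add _ _ (q + 1),
      Finset.sum_range_add f _ (q + 1), ih, Finset.sum_range_succ _ M,
      Finset.sum_range_succ' _ q, Finset.sum_range_succ' _ q]
    have : ∀ x ∈ Finset.range q, (if (q + 1) ∣ (q + 1) * M + (x + 1) then (0:R)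
        else f ((q + 1) * M + (x + 1))) = f ((q + 1) * M + (x + 1)) := by
      intro x hx
      rw [if_neg]
      rw [Nat.dvd_add_right (Dvd.intro _ rfl)]
      intro h
      have := Nat.le_of_dvd (Nat.succ_pos x) h
      have := Finset.mem_range.1 hx
      omega
    rw [Finset.sum_congr rfl this]
    simp
    ring

open Filter Topology in
lemma eis_pow_tendsto (p : ℕ) [Fact p.Prime] (a : ℕ) :
    Tendsto (fun m : ℕ => (a : ℚ_[p]) ^ (2 + p ^ m * (p - 1))) atTop
      (𝓝 (if p ∣ a then 0 else (a : ℚ_[p]) ^ 2)) := by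
  have hp : p.Prime := Fact.out
  have hpr : (0:ℝ) < p := by exact_mod_cast hp.pos
  have hp1 : (p:ℝ)⁻¹ < 1 := inv_lt_one_of_one_lt₀ (by exact_mod_cast hp.one_lt)
  split_ifs with h
  · have hn : ‖(a : ℚ_[p])‖ < 1 := by
      have := (Padic.norm_int_le_pow_iff_dvd (p := p) (a : ℤ) 1).2 (by simpa using Int.natCast_dvd_natCast.2 h)
      refine lt_of_le_of_lt ?_ hp1
      simpa using this
    refine (tendsto_pow_atTop_nhds_zero_of_norm_lt_one hn).comp ?_
    refine tendsto_atTop_mono (fun m => ?_) tendsto_id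
    have h1 : m < p ^ m := Nat.lt_pow_self hp.one_lt
    have h2 : 1 ≤ p - 1 := by have := hp.two_le; omega
    simp only [id]
    nlinarith
  · have key : Tendsto (fun m : ℕ => ((a : ℚ_[p]) ^ (p - 1)) ^ p ^ m) atTop (𝓝 1) := by
      rw [tendsto_iff_norm_sub_tendsto_zero]
      refine squeeze_zero (fun _ => norm_nonneg _) (fun m => ?_)
        (tendsto_pow_atTop_nhds_zero_of_lt_one (by positivity) hp1)
      have hd : (p : ℤ) ∣ (a:ℤ) ^ (p - 1) - 1 := by
        have hc : IsCoprime (a:ℤ) p := by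
          rw [Nat.isCoprime_iff_coprime]
          exact ((Nat.Prime.coprime_iff_not_dvd hp).2 h).symm
        exact (Int.ModEq.pow_card_sub_one_eq_one hp hc).symm.dvd
      have h2 := dvd_sub_pow_of_dvd_sub hd m
      have h3 := (pow_dvd_pow (p:ℤ) (Nat.le_succ m)).trans h2
      have h4 := (Padic.norm_int_le_pow_iff_dvd (p := p) _ _).2 h3
      push_cast at h4
      rw [one_pow] at h4
      simpa using h4
    have := key.const_mul ((a : ℚ_[p]) ^ 2)
    rw [mul_one] at this
    refine this.congr (fun m => ?_)
    rw [pow_add, mul_comm (p ^ m), pow_mul]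

open Filter Topology in
lemma eis_B_tendsto (p : ℕ) [Fact p.Prime] :
    Tendsto (fun m : ℕ => ((bernoulli (2 + p ^ m * (p - 1)) : ℚ) : ℚ_[p])) atTop
      (𝓝 ((1 - p) * ((bernoulli 2 : ℚ) : ℚ_[p]))) := by
  have hp : p.Prime := Fact.out
  have hp0 : (p : ℚ_[p]) ≠ 0 := by exact_mod_cast hp.ne_zero
  have hpr : (0:ℝ) < p := by exact_mod_cast hp.pos
  have hp1 : (p:ℝ)⁻¹ < 1 := inv_lt_one_of_one_lt₀ (by exact_mod_cast hp.one_lt)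
  set S : ℕ → ℕ → ℚ_[p] := fun n k =>
    (∑ a ∈ Finset.range (p ^ (n + 1)), (a : ℚ_[p]) ^ k) / (p : ℚ_[p]) ^ (n + 1) with hS
  have hz : Tendsto (fun n : ℕ => (p : ℝ) * ((p : ℝ)⁻¹) ^ n) atTop (𝓝 0) := by
    simpa using (tendsto_pow_atTop_nhds_zero_of_lt_one (by positivity) hp1).const_mul (p:ℝ)
  have hS2 : Tendsto (fun n => S n 2) atTop (𝓝 ((bernoulli 2 : ℚ) : ℚ_[p])) := by
    rw [tendsto_iff_norm_sub_tendsto_zero]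
    refine squeeze_zero (fun _ => norm_nonneg _) (fun n => ?_) hz
    rw [norm_sub_rev]
    exact eis_approx p n 2
  have hA : Tendsto (fun n => S (n + 1) 2 - p * S n 2) atTop
      (𝓝 ((1 - p) * ((bernoulli 2 : ℚ) : ℚ_[p]))) := by
    have := ((tendsto_add_atTop_iff_nat 1).2 hS2).sub (hS2.const_mul (p : ℚ_[p]))
    convert this using 2
    ring
  have hlim : ∀ n, Tendsto (fun m : ℕ => S (n + 1) (2 + p ^ m * (p - 1))) atTop
      (𝓝 (S (n + 1) 2 - p * S n 2)) := by
    intro n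
    have h1 := (tendsto_finsetSum (Finset.range (p ^ (n + 1 + 1)))
      (fun a _ => eis_pow_tendsto p a)).div_const ((p : ℚ_[p]) ^ (n + 1 + 1))
    convert h1 using 2
    obtain ⟨q, hq⟩ : ∃ q, p = q + 1 := ⟨p - 1, by have := hp.pos; omega⟩
    have h2 := eis_filter q (p ^ (n + 1)) (fun a => (a : ℚ_[p]) ^ 2)
    rw [← hq, ← pow_succ'] at h2
    rw [h2, sub_div]
    congr 1
    simp only [hS, Nat.cast_mul, mul_pow, ← Finset.mul_sum]
    rw [pow_succ (p : ℚ_[p]) (n + 1)]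
    field_simp
  rw [Metric.tendsto_atTop]
  intro ε hε
  have e1 := (Metric.tendsto_atTop.1 hA) (ε / 3) (by positivity)
  have e2 := (Metric.tendsto_atTop.1 hz) (ε / 3) (by positivity)
  obtain ⟨n1, h1⟩ := e1
  obtain ⟨n2, h2⟩ := e2
  set n := max n1 n2
  have h1' := h1 n (le_max_left _ _)
  have h2' := h2 (n + 1) ((le_max_right _ _).trans (Nat.le_succ _))
  obtain ⟨M, h3⟩ := (Metric.tendsto_atTop.1 (hlim n)) (ε / 3) (by positivity)
  refine ⟨M, fun m hm => ?_⟩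
  have h4 := h3 m hm
  have h5 := eis_approx p (n + 1) (2 + p ^ m * (p - 1))
  rw [← dist_eq_norm] at h5
  have h6 := (le_abs_self _).trans_lt (by simpa only [Real.dist_eq, sub_zero] using h2')
  refine (dist_triangle4 _ _ _ _).trans_lt
    (b := dist _ (S (n + 1) (2 + p ^ m * (p - 1))) + dist _ (S (n + 1) 2 - p * S n 2) + _) ?_
  have h7 : dist ((bernoulli (2 + p ^ m * (p - 1)) : ℚ) : ℚ_[p])
    (S (n + 1) (2 + p ^ m * (p - 1))) < ε / 3 := h5.trans_lt h6
  linarith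


/-- The constant terms `−B_k/(2k)` of the classical Eisenstein series `G_k` for
`k = 2 + p^m(p−1)` converge p-adically to `(p−1)/24`, the constant term of `G_2^⋆`. -/
theorem eisenstein_constant_term_padic_limit
    (p : ℕ) [Fact p.Prime] (hp5 : 5 ≤ p) :
    Filter.Tendsto
      (fun m : ℕ =>
        -((bernoulli (2 + p ^ m * (p - 1)) : ℚ) : ℚ_[p]) /
          (((2 * (2 + p ^ m * (p - 1)) : ℕ) : ℚ_[p])))
      Filter.atTop
      (nhds (((p : ℚ_[p]) - 1) / 24)) := by
  have hp : p.Prime := Fact.out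
  have hp1 : (p:ℝ)⁻¹ < 1 := inv_lt_one_of_one_lt₀ (by exact_mod_cast hp.one_lt)
  have hden : Filter.Tendsto (fun m : ℕ => (((2 * (2 + p ^ m * (p - 1)) : ℕ) : ℚ_[p])))
      Filter.atTop (nhds 4) := by
    have h0 : Filter.Tendsto (fun m : ℕ => (p : ℚ_[p]) ^ m) Filter.atTop (nhds 0) :=
      tendsto_pow_atTop_nhds_zero_of_norm_lt_one (by rw [Padic.norm_p]; exact hp1)
    have h1 := ((h0.mul_const ((p - 1 : ℕ) : ℚ_[p])).const_add 2).const_mul 2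
    convert h1 using 2
    · push_cast; ring
    · norm_num
  have h := (eis_B_tendsto p).neg.div hden (by norm_num)
  have e : ((p : ℚ_[p]) - 1) / 24 = -((1 - (p : ℚ_[p])) * ((bernoulli 2 : ℚ) : ℚ_[p])) / 4 := by
    rw [bernoulli_two]
    push_cast
    ring
  rw [e]
  exact h
end
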